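/- Let H be a 4-dimensional complex vector space and C = {(p,a) ∈ Λ²H × H : p ∧ p = 0, p ∧ a = 0}. Then C is an irreducible variety of codimension 3 in the 10-dimensional affine space Λ²H × H; in particular C is not a complete intersection (it is cut out by 5 equations but has codimension 3). -/

import Mathlib

noncomputable section

open MvPolynomial

/-- Polynomial ring on `Λ²H × H ≅ ℂ⁶ × ℂ⁴` for `H = ℂ⁴`; the `Fin 6` variables are
the coordinates `p₀₁, p₀₂, p₀₃, p₁₂, p₁₃, p₂₃` of `p ∈ Λ²H` and the `Fin 4`
variables those of `a ∈ H`. -/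
abbrev R9 := MvPolynomial (Fin 6 ⊕ Fin 4) ℂ

/-- The Plücker relation `p ∧ p = 0`. -/
def pl9 : R9 := X (Sum.inl 0) * X (Sum.inl 5) - X (Sum.inl 1) * X (Sum.inl 4) +
  X (Sum.inl 2) * X (Sum.inl 3)

/-- The four components of `p ∧ a ∈ Λ³H`. -/
def wedge9 : Fin 4 → R9 :=
  ![X (Sum.inl 0) * X (Sum.inr 2) - X (Sum.inl 1) * X (Sum.inr 1) +
      X (Sum.inl 3) * X (Sum.inr 0),
    X (Sum.inl 0) * X (Sum.inr 3) - X (Sum.inl 2) * X (Sum.inr 1) +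
      X (Sum.inl 4) * X (Sum.inr 0),
    X (Sum.inl 1) * X (Sum.inr 3) - X (Sum.inl 2) * X (Sum.inr 2) +
      X (Sum.inl 5) * X (Sum.inr 0),
    X (Sum.inl 3) * X (Sum.inr 3) - X (Sum.inl 4) * X (Sum.inr 2) +
      X (Sum.inl 5) * X (Sum.inr 1)]

/-- `C = {(p,a) ∈ Λ²H × H : p ∧ p = 0, p ∧ a = 0}`, in coordinates. -/
def C9 : Set (Fin 6 ⊕ Fin 4 → ℂ) :=
  {x | eval x pl9 = 0 ∧ ∀ i, eval x (wedge9 i) = 0}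

/-- The vanishing ideal of `C`. -/
def J9 : Ideal R9 where
  carrier := {f | ∀ x ∈ C9, eval x f = 0}
  add_mem' := fun ha hb x hx => by simp [map_add, ha x hx, hb x hx]
  zero_mem' := fun x hx => by simp
  smul_mem' := fun c f hf x hx => by simp [smul_eq_mul, map_mul, hf x hx]

/-
Irreducibility: a point of `C` is of the form `(u ∧ v, s u + t v)`, so `C` is the image of an affine
space under a polynomial map, and a polynomial vanishing on `C` is one whose pull-back is zero.

Dimension: over `a₀ ≠ 0` the equation `p ∧ a = 0` says that `p = a ∧ w` with `w₀ = 0`, and adding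
a bivector `c` with `c₀ⱼ = 0` extends `(w, a) ↦ (a ∧ w, a)` to a birational map
`𝔸¹⁰ → Λ²H × H`. Pushing forward the complete flag of coordinate subspaces gives a chain of primes
of length `10 = dim R9` whose member of index `3` is `J9`. A chain of maximal length computes the
coheight of each of its members, so `dim R9 / J9 = 10 - 3`.

Generators: `C` contains every coordinate axis, so `J9 ⊆ 𝔪²`. The quadratic part of an element of
`J9` is then a linear combination of the quadratic parts of any generators, and the four
components of `p ∧ a` are linearly independent quadrics, so three generators do not suffice.
-/

section Dimension

lemma coheight_apply_of_krullDim_le_length {α : Type*} [Preorder α] (L : LTSeries α)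
    (hL : Order.krullDim α ≤ L.length) (i : Fin (L.length + 1)) :
    Order.coheight (L i) = i.rev := by
  have : Nonempty α := ⟨L i⟩
  have hsum : Order.height (L i) + Order.coheight (L i) ≤ L.length := by
    rw [Order.krullDim_eq_iSup_height_add_coheight_of_nonempty] at hL
    exact (le_iSup (fun a : α ↦ Order.height a + Order.coheight a) (L i)).trans
      (by exact_mod_cast hL)
  have hheight := Order.index_le_height L i
  refine le_antisymm ?_ (Order.rev_index_le_coheight L i)
  have hlen : ((L.length : ℕ) : ℕ∞) = i + i.rev := by
    rw [← Nat.cast_add, Fin.val_rev]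
    congr 1
    omega
  exact (ENat.add_le_add_iff_left (ENat.natCast_ne_top i)).mp
    ((add_le_add_left hheight _).trans (hsum.trans_eq hlen))

lemma ringKrullDim_quotient_of_le_length {R : Type*} [CommRing R]
    (L : LTSeries (PrimeSpectrum R)) (hL : ringKrullDim R ≤ L.length) (i : Fin (L.length + 1)) :
    ringKrullDim (R ⧸ (L i).asIdeal) = i.rev := by
  have hIci : PrimeSpectrum.zeroLocus ((L i).asIdeal : Set R) = Set.Ici (L i) := rfl
  rw [ringKrullDim_quotient, hIci, ← Order.coheight_eq_krullDim_Ici,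
    coheight_apply_of_krullDim_le_length L hL]
  rfl

end Dimension

section VanishingIdeal

/-- The polynomial map `R^τ → R^σ` of affine spaces whose `i`-th component is `φ i`. -/
def polyMap {R σ τ : Type*} [CommSemiring R] (φ : σ → MvPolynomial τ R) (y : τ → R) : σ → R :=
  fun i ↦ eval y (φ i)

/-- The coordinate subspace `y₀ = ⋯ = y_{k-1} = 0` of `Rⁿ`; over a field, `k = 0, …, n` give a
complete flag. -/
def coordFlag (R : Type*) [Zero R] (n k : ℕ) : Set (Fin n → R) :=
  {y | ∀ j : Fin n, (j : ℕ) < k → y j = 0}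

variable {K σ τ : Type*} [Field K]

lemma vanishingIdeal_polyMap_image (φ : σ → MvPolynomial τ K) (V : Set (τ → K)) :
    vanishingIdeal K (polyMap φ '' V) = (vanishingIdeal K V).comap (bind₁ φ) := by
  ext f
  have heval (y : τ → K) : eval y (bind₁ φ f) = eval (polyMap φ y) f := aeval_bind₁ y φ f
  simp [heval]

lemma vanishingIdeal_univ_eq_bot [Infinite K] :
    vanishingIdeal K (Set.univ : Set (σ → K)) = ⊥ := by
  refine eq_bot_iff.mpr fun f hf ↦ MvPolynomial.funext fun x ↦ ?_
  simpa [aeval_eq_eval] using hf x (Set.mem_univ x)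

lemma isPrime_vanishingIdeal_range_polyMap [Infinite K] (φ : σ → MvPolynomial τ K) :
    (vanishingIdeal K (Set.range (polyMap φ))).IsPrime := by
  rw [← Set.image_univ, vanishingIdeal_polyMap_image, vanishingIdeal_univ_eq_bot]
  infer_instance

lemma vanishingIdeal_lt_vanishingIdeal {V W : Set (σ → K)} (hWV : W ⊆ V) {f : MvPolynomial σ K}
    (hf : f ∈ vanishingIdeal K W) {x : σ → K} (hx : x ∈ V) (hfx : eval x f ≠ 0) :
    vanishingIdeal K V < vanishingIdeal K W :=
  lt_of_le_of_ne (vanishingIdeal_anti_mono hWV) fun h ↦ hfx ((h ▸ hf) x hx)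

lemma vanishingIdeal_eq_of_isPrime {V W : Set (σ → K)} (hV : (vanishingIdeal K V).IsPrime)
    (hWV : W ⊆ V) {g : MvPolynomial σ K} (hg : g ∉ vanishingIdeal K V)
    (hVW : ∀ x ∈ V, eval x g ≠ 0 → x ∈ W) : vanishingIdeal K V = vanishingIdeal K W := by
  refine le_antisymm (vanishingIdeal_anti_mono hWV) fun f hf ↦ ?_
  refine (hV.mem_or_mem (x := f) (y := g) fun x hx ↦ ?_).resolve_right hg
  by_cases hgx : eval x g = 0
  · rw [map_mul, aeval_eq_eval, hgx, mul_zero]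
  · rw [map_mul, hf x (hVW x hx hgx), zero_mul]

lemma range_polyMap_truncate (n k : ℕ) :
    Set.range (polyMap fun j : Fin n ↦ if (j : ℕ) < k then (0 : MvPolynomial _ K) else X j) =
      coordFlag K n k := by
  ext y
  constructor
  · rintro ⟨z, rfl⟩ j hj
    simp [polyMap, hj]
  · refine fun hy ↦ ⟨y, funext fun j ↦ ?_⟩
    by_cases hj : (j : ℕ) < k
    · simp [polyMap, hj, hy j hj]
    · simp [polyMap, hj]

lemma isPrime_vanishingIdeal_polyMap_coordFlag [Infinite K] {n : ℕ}
    (φ : σ → MvPolynomial (Fin n) K) (k : ℕ) :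
    (vanishingIdeal K (polyMap φ '' coordFlag K n k)).IsPrime := by
  rw [vanishingIdeal_polyMap_image, ← range_polyMap_truncate]
  have := isPrime_vanishingIdeal_range_polyMap
    fun j : Fin n ↦ if (j : ℕ) < k then (0 : MvPolynomial _ K) else X j
  infer_instance

end VanishingIdeal

section Generators

variable {σ R : Type*} [CommRing R]

lemma homogeneousComponent_mul_of_mem_pow_idealOfVars {d : ℕ} {f : MvPolynomial σ R}
    (hf : f ∈ idealOfVars σ R ^ d) (r : MvPolynomial σ R) :
    homogeneousComponent d (r * f) = constantCoeff r • homogeneousComponent d f := by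
  have hr : r - C (constantCoeff r) ∈ idealOfVars σ R := by
    rw [← pow_one (idealOfVars σ R), mem_pow_idealOfVars_iff']
    intro x hx
    rw [Nat.lt_one_iff, Finsupp.degree_eq_zero_iff] at hx
    simp [hx, constantCoeff_eq]
  have hmem : (r - C (constantCoeff r)) * f ∈ idealOfVars σ R ^ (d + 1) := by
    rw [pow_succ']
    exact Ideal.mul_mem_mul hr hf
  have hzero : homogeneousComponent d ((r - C (constantCoeff r)) * f) = 0 :=
    homogeneousComponent_eq_zero' _ _ fun x hx ↦
      (Nat.lt_of_succ_le ((mem_pow_idealOfVars_iff _ _).mp hmem x hx)).ne'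
  rw [sub_mul, map_sub, sub_eq_zero, homogeneousComponent_C_mul] at hzero
  rw [hzero, smul_eq_C_mul]

lemma homogeneousComponent_mem_span {d : ℕ} {s : Set (MvPolynomial σ R)}
    (hs : s ⊆ (idealOfVars σ R ^ d : Ideal _)) {f : MvPolynomial σ R} (hf : f ∈ Ideal.span s) :
    homogeneousComponent d f ∈ Submodule.span R (homogeneousComponent d '' s) := by
  induction hf using Submodule.span_induction with
  | mem g hg => exact Submodule.subset_span ⟨g, hg, rfl⟩
  | zero => simp
  | add g h _ _ ihg ihh => simpa only [map_add] using add_mem ihg ihh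
  | smul r g hg ih =>
    rw [smul_eq_mul, homogeneousComponent_mul_of_mem_pow_idealOfVars (Ideal.span_le.mpr hs hg)]
    exact Submodule.smul_mem _ _ ih

lemma card_le_card_of_isHomogeneous_of_mem_span [Nontrivial R] {ι : Type*} [Fintype ι] {d : ℕ}
    {s : Finset (MvPolynomial σ R)}
    (hs : (s : Set (MvPolynomial σ R)) ⊆ (idealOfVars σ R ^ d : Ideal _))
    {v : ι → MvPolynomial σ R} (hv : LinearIndependent R v) (hhom : ∀ i, (v i).IsHomogeneous d)
    (hmem : ∀ i, v i ∈ Ideal.span (s : Set (MvPolynomial σ R))) : Fintype.card ι ≤ s.card := by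
  classical
  have hrange : Set.range v ⊆
      Submodule.span R (s.image (homogeneousComponent d) : Set (MvPolynomial σ R)) := by
    rintro _ ⟨i, rfl⟩
    rw [← homogeneousComponent_eq_self (hhom i), Finset.coe_image]
    exact homogeneousComponent_mem_span hs (hmem i)
  calc Fintype.card ι ≤ Fintype.card (s.image (homogeneousComponent d)) :=
        linearIndependent_le_span_aux' v hv _ hrange
    _ ≤ s.card := by simpa only [Fintype.card_coe] using Finset.card_image_le

lemma coeff_aeval_piSingle_X [DecidableEq σ] (i : σ) (n : ℕ) (f : MvPolynomial σ R) :
    (aeval (Pi.single i (Polynomial.X : Polynomial R)) f).coeff n =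
      f.coeff (Finsupp.single i n) := by
  induction f using MvPolynomial.induction_on generalizing n with
  | C a => simp [coeff_C, Polynomial.coeff_C, eq_comm (a := (0 : σ →₀ ℕ))]
  | add p q hp hq => simp [hp, hq]
  | mul_X p j hp =>
    obtain rfl | hji := eq_or_ne j i
    · cases n <;> simp [hp, coeff_mul_X']
    · simp [hji, coeff_mul_X']

lemma exists_eq_single_of_degree_lt_two [Nonempty σ] {x : σ →₀ ℕ} (hx : x.degree < 2) :
    ∃ i n, x = Finsupp.single i n := by
  rw [← Finsupp.card_support_le_one']
  have hcard : x.support.card ≤ x.degree := by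
    rw [Finset.card_eq_sum_ones]
    exact Finset.sum_le_sum fun i hi ↦ Nat.one_le_iff_ne_zero.mpr (Finsupp.mem_support_iff.mp hi)
  lia

lemma vanishingIdeal_le_sq_idealOfVars {K : Type*} [Field K] [Infinite K] [Nonempty σ]
    [DecidableEq σ] {V : Set (σ → K)} (hV : ∀ i t, Pi.single i t ∈ V) :
    vanishingIdeal K V ≤ idealOfVars σ K ^ 2 := by
  intro f hf
  rw [mem_pow_idealOfVars_iff']
  intro x hx
  obtain ⟨i, n, rfl⟩ := exists_eq_single_of_degree_lt_two hx
  have haxis : aeval (Pi.single i (Polynomial.X : Polynomial K)) f = 0 := by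
    refine Polynomial.funext fun t ↦ ?_
    have hsingle : (fun j ↦ Polynomial.aeval t
        ((Pi.single i Polynomial.X : σ → Polynomial K) j)) = Pi.single i t := by
      ext j
      simp [Pi.apply_single (fun _ ↦ Polynomial.eval t)]
    rw [Polynomial.eval_zero, ← hf _ (hV i t), ← Polynomial.coe_aeval_eq_eval,
      comp_aeval_apply, hsingle]
  rw [← coeff_aeval_piSingle_X, haxis, Polynomial.coeff_zero]

end Generators

section Decomposability

variable {A : Type*} [CommRing A]

lemma exists_wedge_of_plucker {ι K : Type*} [Field K] {P : ι → ι → K} {a : ι → K}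
    (hP : ∀ i j k l, P i j * P k l - P i k * P j l + P i l * P j k = 0)
    (ha : ∀ i j k, P i j * a k - P i k * a j + P j k * a i = 0) :
    ∃ (u v : ι → K) (s t : K),
      (∀ k l, P k l = u k * v l - u l * v k) ∧ ∀ k, a k = s * u k + t * v k := by
  by_cases hzero : ∀ i j, P i j = 0
  · exact ⟨a, 0, 1, 0, by simp [hzero], by simp⟩
  push Not at hzero
  obtain ⟨i, j, hij⟩ := hzero
  refine ⟨fun k ↦ P i k / P i j, P j, a j, -a i / P i j, fun k l ↦ ?_, fun k ↦ ?_⟩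
  · field_simp
    linear_combination hP i j k l
  · field_simp
    linear_combination ha i j k

/-- The antisymmetric matrix `(p_ij)` of the bivector with coordinates
`p₀₁, p₀₂, p₀₃, p₁₂, p₁₃, p₂₃`, so that the coordinate relations can be indexed by `Fin 4`. -/
def pluckerMatrix (p : Fin 6 → A) : Matrix (Fin 4) (Fin 4) A :=
  !![0, p 0, p 1, p 2; -p 0, 0, p 3, p 4; -p 1, -p 3, 0, p 5; -p 2, -p 4, -p 5, 0]

lemma pluckerMatrix_plucker {p : Fin 6 → A} (h : p 0 * p 5 - p 1 * p 4 + p 2 * p 3 = 0)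
    (i j k l : Fin 4) :
    pluckerMatrix p i j * pluckerMatrix p k l - pluckerMatrix p i k * pluckerMatrix p j l +
      pluckerMatrix p i l * pluckerMatrix p j k = 0 := by
  fin_cases i <;> fin_cases j <;> fin_cases k <;> fin_cases l <;>
    simp only [pluckerMatrix, Matrix.of_apply, Fin.reduceFinMk, Fin.isValue, Fin.zero_eta,
      Fin.mk_one, Matrix.cons_val] <;>
    first | ring1 | linear_combination h | linear_combination -h

lemma pluckerMatrix_wedge {p : Fin 6 → A} {a : Fin 4 → A}
    (h₀ : p 0 * a 2 - p 1 * a 1 + p 3 * a 0 = 0) (h₁ : p 0 * a 3 - p 2 * a 1 + p 4 * a 0 = 0)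
    (h₂ : p 1 * a 3 - p 2 * a 2 + p 5 * a 0 = 0) (h₃ : p 3 * a 3 - p 4 * a 2 + p 5 * a 1 = 0)
    (i j k : Fin 4) :
    pluckerMatrix p i j * a k - pluckerMatrix p i k * a j + pluckerMatrix p j k * a i = 0 := by
  fin_cases i <;> fin_cases j <;> fin_cases k <;>
    simp only [pluckerMatrix, Matrix.of_apply, Fin.reduceFinMk, Fin.isValue, Fin.zero_eta,
      Fin.mk_one, Matrix.cons_val] <;>
    first
    | ring1
    | linear_combination h₀ | linear_combination h₁ | linear_combination h₂ | linear_combination h₃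
    | linear_combination -h₀ | linear_combination -h₁ | linear_combination -h₂
    | linear_combination -h₃

lemma mem_C9_iff (x : Fin 6 ⊕ Fin 4 → ℂ) : x ∈ C9 ↔
    x (.inl 0) * x (.inl 5) - x (.inl 1) * x (.inl 4) + x (.inl 2) * x (.inl 3) = 0 ∧
    x (.inl 0) * x (.inr 2) - x (.inl 1) * x (.inr 1) + x (.inl 3) * x (.inr 0) = 0 ∧
    x (.inl 0) * x (.inr 3) - x (.inl 2) * x (.inr 1) + x (.inl 4) * x (.inr 0) = 0 ∧
    x (.inl 1) * x (.inr 3) - x (.inl 2) * x (.inr 2) + x (.inl 5) * x (.inr 0) = 0 ∧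
    x (.inl 3) * x (.inr 3) - x (.inl 4) * x (.inr 2) + x (.inl 5) * x (.inr 1) = 0 := by
  simp [C9, pl9, wedge9, Fin.forall_fin_succ]

/-- The parametrization `(u, v, s, t) ↦ (u ∧ v, s u + t v)` of `C9`: the total space of a vector
bundle over `Gr(2, H)`, pulled back to pairs `(u, v)`. The variable `Sum.inl (0, i)` is `u_i`,
`Sum.inl (1, i)` is `v_i`, and `Sum.inr` carries `s, t`. -/
def bundleParam : Fin 6 ⊕ Fin 4 → MvPolynomial ((Fin 2 × Fin 4) ⊕ Fin 2) ℂ :=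
  let u i := X (.inl (0, i))
  let v i := X (.inl (1, i))
  let w i j := u i * v j - u j * v i
  Sum.elim ![w 0 1, w 0 2, w 0 3, w 1 2, w 1 3, w 2 3] fun i ↦ X (.inr 0) * u i + X (.inr 1) * v i

lemma C9_eq_range_polyMap : C9 = Set.range (polyMap bundleParam) := by
  ext x
  constructor
  · intro hx
    obtain ⟨hp, h₀, h₁, h₂, h₃⟩ := (mem_C9_iff x).mp hx
    obtain ⟨u, v, s, t, hP, ha⟩ := exists_wedge_of_plucker
      (pluckerMatrix_plucker (p := x ∘ .inl) hp)
      (pluckerMatrix_wedge (a := x ∘ .inr) h₀ h₁ h₂ h₃)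
    refine ⟨Sum.elim (fun r ↦ ![u, v] r.1 r.2) ![s, t], funext ?_⟩
    rintro (i | i)
    · have hp₀₁ := hP 0 1
      have hp₀₂ := hP 0 2
      have hp₀₃ := hP 0 3
      have hp₁₂ := hP 1 2
      have hp₁₃ := hP 1 3
      have hp₂₃ := hP 2 3
      fin_cases i <;> simp_all [polyMap, bundleParam, pluckerMatrix]
    · simpa [polyMap, bundleParam] using (ha i).symm
  · rintro ⟨y, rfl⟩
    rw [mem_C9_iff]
    refine ⟨?_, ?_, ?_, ?_, ?_⟩ <;> simp [polyMap, bundleParam] <;> ring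

lemma J9_eq_vanishingIdeal : J9 = vanishingIdeal ℂ C9 := rfl

lemma isPrime_J9 : J9.IsPrime := by
  rw [J9_eq_vanishingIdeal, C9_eq_range_polyMap]
  exact isPrime_vanishingIdeal_range_polyMap bundleParam

end Decomposability

section Flag

/-- The birational map `𝔸¹⁰ → Λ²H × H`, `(c, w, a) ↦ (p, a)`, given by `p₀ⱼ = a₀ wⱼ` and
`p_ij = a_i w_j - a_j w_i + c_ij` for `1 ≤ i < j`. The variables `0, …, 9` are
`c₁₂, c₁₃, c₂₃, w₁, w₂, w₃, a₃, a₂, a₁, a₀`; the slice `c = 0` parametrizes `C9` over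
`a₀ ≠ 0`. -/
def chart : Fin 6 ⊕ Fin 4 → MvPolynomial (Fin 10) ℂ :=
  Sum.elim ![X 9 * X 3, X 9 * X 4, X 9 * X 5, X 8 * X 4 - X 7 * X 3 + X 0,
    X 8 * X 5 - X 6 * X 3 + X 1, X 7 * X 5 - X 6 * X 4 + X 2] ![X 9, X 8, X 7, X 6]

/-- Functions whose pull-backs along `chart` are the coordinates `y₀, …, y₉`, up to a factor
`y₉ = a₀`. -/
def flagEquation : Fin 10 → R9 :=
  ![wedge9 0, wedge9 1, wedge9 2, X (.inl 0), X (.inl 1), X (.inl 2),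
    X (.inr 3), X (.inr 2), X (.inr 1), X (.inr 0)]

lemma eval_flagEquation (k : Fin 10) (y : Fin 10 → ℂ) :
    eval (polyMap chart y) (flagEquation k) = y k * if (k : ℕ) < 6 then y 9 else 1 := by
  fin_cases k <;> simp [flagEquation, wedge9, polyMap, chart] <;> ring

lemma vanishingIdeal_chart_coordFlag_lt (k : Fin 10) :
    vanishingIdeal ℂ (polyMap chart '' coordFlag ℂ 10 k) <
      vanishingIdeal ℂ (polyMap chart '' coordFlag ℂ 10 (k + 1)) := by
  let y : Fin 10 → ℂ := fun j ↦ if j < k then 0 else 1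
  have hy : y ∈ coordFlag ℂ 10 k := fun j hj ↦ if_pos hj
  refine vanishingIdeal_lt_vanishingIdeal (f := flagEquation k)
    (Set.image_mono fun z hz j hj ↦ hz j (by lia)) ?_ (Set.mem_image_of_mem _ hy) ?_
  · rintro _ ⟨z, hz, rfl⟩
    rw [aeval_eq_eval, eval_flagEquation, hz k (Nat.lt_succ_self _), zero_mul]
  · have hk : ¬ 9 < k := by lia
    simp [eval_flagEquation, y, hk]

/-- The chain of primes of length `10` in `R9` given by the closures of the images under `chart` of
the coordinate flag. -/
def flagSeries : LTSeries (PrimeSpectrum R9) where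
  length := 10
  toFun k := ⟨_, isPrime_vanishingIdeal_polyMap_coordFlag chart k⟩
  step k := vanishingIdeal_chart_coordFlag_lt k

lemma polyMap_chart_mem_C9 {y : Fin 10 → ℂ} (hy : y ∈ coordFlag ℂ 10 3) :
    polyMap chart y ∈ C9 := by
  have h₀ := hy 0 (by decide)
  have h₁ := hy 1 (by decide)
  have h₂ := hy 2 (by decide)
  rw [mem_C9_iff]
  refine ⟨?_, ?_, ?_, ?_, ?_⟩ <;> simp [polyMap, chart, h₀, h₁, h₂] <;> ring

lemma mem_image_chart_of_mem_C9 {x : Fin 6 ⊕ Fin 4 → ℂ} (hx : x ∈ C9) (ha : x (.inr 0) ≠ 0) :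
    x ∈ polyMap chart '' coordFlag ℂ 10 3 := by
  obtain ⟨-, h₀, h₁, h₂, -⟩ := (mem_C9_iff x).mp hx
  refine ⟨![0, 0, 0, x (.inl 0) / x (.inr 0), x (.inl 1) / x (.inr 0), x (.inl 2) / x (.inr 0),
    x (.inr 3), x (.inr 2), x (.inr 1), x (.inr 0)], fun j hj ↦ ?_, funext ?_⟩
  · fin_cases j <;> simp at hj ⊢
  · rintro (i | i) <;> fin_cases i <;> simp [polyMap, chart] <;> field_simp <;> grind

lemma J9_eq_vanishingIdeal_chart :
    J9 = vanishingIdeal ℂ (polyMap chart '' coordFlag ℂ 10 3) := by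
  have ha : (X (.inr 0) : R9) ∉ J9 := fun h ↦ by
    simpa using h (Pi.single (.inr 0) 1) (by simp [mem_C9_iff])
  refine vanishingIdeal_eq_of_isPrime isPrime_J9 ?_ ha fun x hx hax ↦
    mem_image_chart_of_mem_C9 hx (by simpa using hax)
  rintro _ ⟨y, hy, rfl⟩
  exact polyMap_chart_mem_C9 hy

lemma ringKrullDim_quotient_J9 : ringKrullDim (R9 ⧸ J9) = 7 := by
  have hdim : ringKrullDim R9 ≤ flagSeries.length := by
    rw [MvPolynomial.ringKrullDim_of_isNoetherianRing, ringKrullDim_eq_zero_of_field]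
    simp [flagSeries]
  rw [J9_eq_vanishingIdeal_chart]
  exact ringKrullDim_quotient_of_le_length flagSeries hdim (3 : Fin 11)

end Flag

section Quadrics

lemma J9_le_sq_idealOfVars : J9 ≤ idealOfVars _ ℂ ^ 2 :=
  vanishingIdeal_le_sq_idealOfVars fun i t ↦ by
    rcases i with i | i <;> fin_cases i <;> simp [mem_C9_iff]

lemma isHomogeneous_wedge9 (i : Fin 4) : (wedge9 i).IsHomogeneous 2 := by
  have hmul (j k : Fin 6 ⊕ Fin 4) : (X j * X k : R9).IsHomogeneous 2 :=
    (isHomogeneous_X ℂ j).mul (isHomogeneous_X ℂ k)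
  fin_cases i <;> exact ((hmul _ _).sub (hmul _ _)).add (hmul _ _)

lemma linearIndependent_wedge9 : LinearIndependent ℂ wedge9 := by
  rw [Fintype.linearIndependent_iff]
  intro c hc j
  -- At each test point `(e_kl, e_m)` the vector `p ∧ a` is a basis vector of `Λ³H`.
  let x : Fin 6 ⊕ Fin 4 → ℂ :=
    Pi.single (.inl (![0, 0, 1, 3] j)) 1 + Pi.single (.inr (![2, 3, 3, 3] j)) 1
  have hx := congrArg (eval x) hc
  fin_cases j <;> simpa [x, wedge9, Fin.sum_univ_four, smul_eval] using hx

end Quadrics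

/-- `C` is an irreducible variety of codimension 3 in the 10-dimensional
affine space `Λ²H × H` (its vanishing ideal is prime and its coordinate ring has Krull
dimension 7); in particular `C` is not a complete intersection: its vanishing ideal
cannot be generated by 3 elements (although `C` is cut out by 5 equations). -/
theorem stmt9 :
    J9.IsPrime ∧ ringKrullDim (R9 ⧸ J9) = 7 ∧
    ¬ ∃ f g h : R9, Ideal.span {f, g, h} = J9 := by
  refine ⟨isPrime_J9, ringKrullDim_quotient_J9, ?_⟩
  rintro ⟨f, g, h, hJ⟩
  classical
  have hspan : Ideal.span (({f, g, h} : Finset R9) : Set R9) = J9 := by simpa using hJ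
  have hs : (({f, g, h} : Finset R9) : Set R9) ⊆ (idealOfVars _ ℂ ^ 2 : Ideal R9) :=
    Ideal.span_le.mp (hspan.trans_le J9_le_sq_idealOfVars)
  have hcard : Fintype.card (Fin 4) ≤ ({f, g, h} : Finset R9).card :=
    card_le_card_of_isHomogeneous_of_mem_span hs linearIndependent_wedge9
      isHomogeneous_wedge9 fun i ↦ hspan ▸ fun _ hx ↦ hx.2 i
  exact absurd (hcard.trans Finset.card_le_three) (by decide)

end
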